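/- arXiv:1905.04715 — 2 statements merged into one kernel-verified Lean document; each statement's English description precedes it below -/
import Mathlib

section
/- Let d ≥ 1 be an integer, c ≥ 1 a real number, and K ≥ 1 an integer. Then the cardinality of the finite set Γ^K(d,c) = {m ∈ ℕ₀^d : ∏_{j=1}^d (m_j + c) ≤ K} is at most K·(1 + log K)^{d−1}. -/
/-!
Since `c ≥ 1`, it suffices to count the tuples with `∏ (m j + 1) ≤ K`, a condition on natural
numbers. These are counted by induction on the dimension: fixing the first coordinate `i` leaves
the same problem in one dimension less with `K` replaced by `⌊K / (i + 1)⌋`, so the count is at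
most `∑ i < K, K / (i + 1) * (1 + log K) ^ (d - 1)`, and the harmonic sum is at most `1 + log K`.
-/

/-- The count for `c = 1` in dimension `d + 1`. It is phrased through a covering finset, which
yields finiteness together with the bound. The case `K = 0` is included, with `log 0 = 0`. -/
lemma exists_cover_Gamma_one (d : ℕ) : ∀ K : ℕ, ∃ s : Finset (Fin (d + 1) → ℕ),
    (∀ m : Fin (d + 1) → ℕ, ∏ j, (m j + 1) ≤ K → m ∈ s) ∧
      (s.card : ℝ) ≤ K * (1 + Real.log K) ^ d := by
  induction d with
  | zero =>
    intro K
    refine ⟨(Finset.range K).image (fun i _ => i), fun m hm => ?_, ?_⟩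
    · rw [Fin.prod_univ_succ, Fin.prod_univ_zero, mul_one] at hm
      refine Finset.mem_image.2 ⟨m 0, Finset.mem_range.2 hm, ?_⟩
      funext j
      rw [show j = 0 from Fin.ext (by simp)]
    · have h := Finset.card_image_le (s := Finset.range K)
        (f := fun (i : ℕ) (_ : Fin (0 + 1)) => i)
      rw [Finset.card_range] at h
      simpa using h
  | succ d ih =>
    intro K
    choose s hs hcard using ih
    refine ⟨(Finset.range K).biUnion fun i =>
      (s (K / (i + 1))).image (fun m => (Fin.cons i m : Fin (d + 1 + 1) → ℕ)),
      fun m hm => ?_, ?_⟩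
    · rw [Fin.prod_univ_succ] at hm
      have hpos : 0 < ∏ j : Fin (d + 1), (m j.succ + 1) :=
        Finset.prod_pos fun _ _ => Nat.succ_pos _
      refine Finset.mem_biUnion.2 ⟨m 0, Finset.mem_range.2 ?_, Finset.mem_image.2
        ⟨Fin.tail m, hs _ _ ?_, Fin.cons_self_tail m⟩⟩
      · exact (Nat.le_mul_of_pos_right _ hpos).trans hm
      · rw [Nat.le_div_iff_mul_le (Nat.succ_pos _), mul_comm]
        exact hm
    · have hterm : ∀ i ∈ Finset.range K,
          (((s (K / (i + 1))).image
            (fun m => (Fin.cons i m : Fin (d + 1 + 1) → ℕ))).card : ℝ) ≤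
            (K * (1 + Real.log K) ^ d) * ((i + 1 : ℕ) : ℝ)⁻¹ := by
        intro i hi
        have hiK : i + 1 ≤ K := Finset.mem_range.1 hi
        have hq : 1 ≤ K / (i + 1) := Nat.div_pos hiK (Nat.succ_pos _)
        have hq' : (1 : ℝ) ≤ ((K / (i + 1) : ℕ) : ℝ) := by exact_mod_cast hq
        have hlog0 := Real.log_nonneg hq'
        have hlog : Real.log ((K / (i + 1) : ℕ) : ℝ) ≤ Real.log K :=
          Real.log_le_log (by linarith) (by exact_mod_cast Nat.div_le_self _ _)
        calc _ ≤ ((s (K / (i + 1))).card : ℝ) := by exact_mod_cast Finset.card_image_le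
          _ ≤ ((K / (i + 1) : ℕ) : ℝ) * (1 + Real.log ((K / (i + 1) : ℕ) : ℝ)) ^ d := hcard _
          _ ≤ ((K : ℝ) / ((i + 1 : ℕ) : ℝ)) * (1 + Real.log K) ^ d := by
            gcongr
            exact Nat.cast_div_le
          _ = _ := by ring
      have hharm : ∑ i ∈ Finset.range K, ((i + 1 : ℕ) : ℝ)⁻¹ ≤ 1 + Real.log K := by
        simpa [harmonic] using harmonic_le_one_add_log K
      have hlogK := Real.log_natCast_nonneg K
      calc _ ≤ ∑ i ∈ Finset.range K, (((s (K / (i + 1))).image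
            (fun m => (Fin.cons i m : Fin (d + 1 + 1) → ℕ))).card : ℝ) := by
            exact_mod_cast Finset.card_biUnion_le
        _ ≤ ∑ i ∈ Finset.range K, (K * (1 + Real.log K) ^ d) * ((i + 1 : ℕ) : ℝ)⁻¹ :=
            Finset.sum_le_sum hterm
        _ = (K * (1 + Real.log K) ^ d) * ∑ i ∈ Finset.range K, ((i + 1 : ℕ) : ℝ)⁻¹ := by
            rw [Finset.mul_sum]
        _ ≤ (K * (1 + Real.log K) ^ d) * (1 + Real.log K) := by gcongr
        _ = _ := by ring

/-- Let `d ≥ 1` be an integer, `c ≥ 1` a real number, and `K ≥ 1` an integer. Then the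
cardinality of the finite set `Γ^K(d,c) = {m ∈ ℕ₀^d : ∏_{j=1}^d (m_j + c) ≤ K}` is at
most `K · (1 + log K)^{d-1}`, where `log` is the natural logarithm. -/
theorem card_Gamma_le (d K : ℕ) (c : ℝ) (hd : 1 ≤ d) (hc : 1 ≤ c) (hK : 1 ≤ K) :
    (Nat.card {m : Fin d → ℕ // ∏ j, ((m j : ℝ) + c) ≤ K} : ℝ) ≤
      K * (1 + Real.log K) ^ (d - 1) := by
  obtain ⟨d, rfl⟩ := Nat.exists_eq_add_of_le' hd
  obtain ⟨s, hs, hcard⟩ := exists_cover_Gamma_one d K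
  have hmem : ∀ m : Fin (d + 1) → ℕ, ∏ j, ((m j : ℝ) + c) ≤ K → m ∈ s := by
    intro m hm
    apply hs
    have h : ∏ j, ((m j : ℝ) + 1) ≤ K :=
      (Finset.prod_le_prod (fun _ _ => by positivity) (fun _ _ => by gcongr)).trans hm
    exact_mod_cast h
  have hle : Nat.card {m : Fin (d + 1) → ℕ // ∏ j, ((m j : ℝ) + c) ≤ K} ≤ s.card := by
    rw [← Nat.card_eq_finsetCard s]
    exact Nat.card_le_card_of_injective
      (fun m => (⟨m.1, hmem m.1 m.2⟩ : s))
      (fun a b h => Subtype.ext (congrArg (fun x => x.1) h))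
  rw [Nat.add_sub_cancel]
  exact (Nat.cast_le.2 hle).trans hcard
end

section
/- Let d ≥ 1 be an integer, c ≥ 1 a real number, λ > 0 a real number, and K ≥ 1 an integer, and set L = (K+1)/(2λ²)^d. Then the cardinality of the finite set {m ∈ ℕ₀^d : (2λ²)^d·∏_{j=1}^d (m_j + c) < K+1} is at most L·(1 + log(1 + L))^{d−1}. -/
/-!
Since `c ≥ 1`, the set is contained in `{m : ∏ (m_j + 1) ≤ L}`, so it suffices to bound the number
`N_d(L)` of `d`-tuples of positive integers with product at most `L`. Clearly `N_1(L) = ⌊L⌋ ≤ L`,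
and fixing the first entry `k` gives `N_{d+1}(L) ≤ ∑_{k ≤ L} N_d(L / k)`. Bounding each logarithmic
factor by its value at `L`, the induction step reduces to the harmonic sum estimate
`∑_{k ≤ L} 1 / k ≤ 1 + log L`.
-/

/-- The tuples of `n + 1` positive integers (shifted by one) with product at most `L` lie in a
finite set of the claimed size. Asking only for a covering `Finset` yields finiteness and the
bound in the same induction. -/
lemma exists_finset_prod_le (n : ℕ) : ∀ L : ℝ, 0 < L → ∃ F : Finset (Fin (n + 1) → ℕ),
    (∀ m : Fin (n + 1) → ℕ, ∏ j, ((m j : ℝ) + 1) ≤ L → m ∈ F) ∧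
    (F.card : ℝ) ≤ L * (1 + Real.log (1 + L)) ^ n := by
  induction n with
  | zero =>
    intro L hL
    refine ⟨(Finset.range ⌊L⌋₊).image (fun k _ => k), ?_, ?_⟩
    · intro m hm
      simp only [Fin.prod_univ_succ, Finset.univ_eq_empty, Finset.prod_empty, mul_one] at hm
      refine Finset.mem_image.2 ⟨m 0, Finset.mem_range.2 ?_, ?_⟩
      · exact Nat.lt_of_succ_le (Nat.le_floor (by push_cast; exact hm))
      · funext i
        rw [Fin.fin_one_eq_zero i]
    · rw [pow_zero, mul_one]
      refine le_trans ?_ (Nat.floor_le hL.le)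
      exact_mod_cast Finset.card_image_le.trans (Finset.card_range _).le
  | succ n ih =>
    intro L hL
    have hpos (k : ℕ) : (0 : ℝ) < (k : ℝ) + 1 := by positivity
    choose F hF hcard using fun k : ℕ => ih (L / ((k : ℝ) + 1)) (div_pos hL (hpos k))
    refine ⟨(Finset.range ⌊L⌋₊).biUnion fun k => (F k).image (Fin.cons (α := fun _ => ℕ) k), ?_, ?_⟩
    · intro m hm
      rw [Fin.prod_univ_succ] at hm
      have hone : (1 : ℝ) ≤ ∏ j : Fin (n + 1), ((m j.succ : ℝ) + 1) :=
        Finset.prod_induction _ (fun x : ℝ => 1 ≤ x) (fun _ _ => one_le_mul_of_one_le_of_one_le)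
          le_rfl fun j _ => by simp
      refine Finset.mem_biUnion.2 ⟨m 0, Finset.mem_range.2 ?_, Finset.mem_image.2
        ⟨Fin.tail m, hF _ _ ?_, Fin.cons_self_tail m⟩⟩
      · refine Nat.lt_of_succ_le (Nat.le_floor ?_)
        push_cast
        nlinarith [hpos (m 0)]
      · rw [le_div_iff₀' (hpos _)]
        exact hm
    · have hlog : 0 ≤ Real.log (1 + L) := Real.log_nonneg (by linarith)
      have hterm (k : ℕ) : ((F k).card : ℝ) ≤
          L * (1 + Real.log (1 + L)) ^ n * ((k : ℝ) + 1)⁻¹ := by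
        have hle : L / ((k : ℝ) + 1) ≤ L := div_le_self hL.le (by simp)
        have hq : 0 < L / ((k : ℝ) + 1) := div_pos hL (hpos k)
        have hlogk : 0 ≤ Real.log (1 + L / ((k : ℝ) + 1)) := Real.log_nonneg (by linarith)
        calc ((F k).card : ℝ)
            ≤ L / ((k : ℝ) + 1) * (1 + Real.log (1 + L / ((k : ℝ) + 1))) ^ n := hcard k
          _ ≤ L / ((k : ℝ) + 1) * (1 + Real.log (1 + L)) ^ n := by gcongr
          _ = _ := by rw [div_eq_mul_inv]; ring
      have hharm : ∑ k ∈ Finset.range ⌊L⌋₊, ((k : ℝ) + 1)⁻¹ ≤ 1 + Real.log (1 + L) := by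
        rcases lt_or_ge L 1 with h | h
        · rw [Nat.floor_eq_zero.2 h]
          simp only [Finset.range_zero, Finset.sum_empty]
          linarith
        · have h1 := harmonic_floor_le_one_add_log L h
          have h2 : Real.log L ≤ Real.log (1 + L) := Real.log_le_log hL (by linarith)
          simp only [harmonic, Rat.cast_sum, Rat.cast_inv, Nat.cast_add,
            Nat.cast_one] at h1
          push_cast at h1
          linarith
      calc (((Finset.range ⌊L⌋₊).biUnion fun k => (F k).image (Fin.cons (α := fun _ => ℕ) k)).card : ℝ)
          ≤ ∑ k ∈ Finset.range ⌊L⌋₊, ((F k).card : ℝ) := by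
            rw [← Nat.cast_sum]
            exact Nat.cast_le.2 (Finset.card_biUnion_le.trans
              (Finset.sum_le_sum fun k _ => Finset.card_image_le))
        _ ≤ ∑ k ∈ Finset.range ⌊L⌋₊, L * (1 + Real.log (1 + L)) ^ n * ((k : ℝ) + 1)⁻¹ :=
            Finset.sum_le_sum fun k _ => hterm k
        _ = L * (1 + Real.log (1 + L)) ^ n * ∑ k ∈ Finset.range ⌊L⌋₊, ((k : ℝ) + 1)⁻¹ := by
            rw [Finset.mul_sum]
        _ ≤ L * (1 + Real.log (1 + L)) ^ n * (1 + Real.log (1 + L)) := by gcongr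
        _ = L * (1 + Real.log (1 + L)) ^ (n + 1) := by ring

/-- Let `d ≥ 1` be an integer, `c ≥ 1` a real number, `λ > 0` a real number and `K ≥ 1`
an integer, and set `L = (K+1)/(2λ²)^d`. Then the cardinality of the finite set
`{m ∈ ℕ₀^d : (2λ²)^d · ∏_{j=1}^d (m_j + c) < K+1}` is at most
`L · (1 + log (1 + L))^{d-1}`, where `log` is the natural logarithm. -/
theorem card_Gamma_lambda_le (d K : ℕ) (c lam : ℝ) (hd : 1 ≤ d) (hc : 1 ≤ c)
    (hlam : 0 < lam) (hK : 1 ≤ K) :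
    (Nat.card {m : Fin d → ℕ //
        (2 * lam ^ 2) ^ d * ∏ j, ((m j : ℝ) + c) < K + 1} : ℝ) ≤
      ((K + 1) / (2 * lam ^ 2) ^ d) *
        (1 + Real.log (1 + (K + 1) / (2 * lam ^ 2) ^ d)) ^ (d - 1) := by
  obtain ⟨n, rfl⟩ : ∃ n, d = n + 1 := ⟨d - 1, by omega⟩
  have hA : 0 < (2 * lam ^ 2) ^ (n + 1) := by positivity
  obtain ⟨F, hF, hcard⟩ := exists_finset_prod_le n (((K : ℝ) + 1) / (2 * lam ^ 2) ^ (n + 1))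
    (by positivity)
  refine le_trans ?_ hcard
  have hmem (m : Fin (n + 1) → ℕ)
      (hm : (2 * lam ^ 2) ^ (n + 1) * ∏ j, ((m j : ℝ) + c) < K + 1) : m ∈ F := by
    refine hF m ?_
    rw [le_div_iff₀' hA]
    refine le_trans ?_ hm.le
    gcongr
  have hinj := Nat.card_le_card_of_injective
    (fun m : {m : Fin (n + 1) → ℕ //
        (2 * lam ^ 2) ^ (n + 1) * ∏ j, ((m j : ℝ) + c) < K + 1} => (⟨m.1, hmem m.1 m.2⟩ : F))
    (fun a b h => Subtype.ext (Subtype.mk.inj h))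
  rw [Nat.card_eq_fintype_card (α := F), Fintype.card_coe] at hinj
  exact_mod_cast hinj
end
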